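/- Let a_1, …, a_r : [0,2π)^ν → ℝ be bounded measurable real-valued functions, and for each k let [m_k, M_k] be a closed interval containing the essential range of a_k, so that each Toeplitz compression T_n(a_k) is a Hermitian matrix with all eigenvalues in [m_k, M_k]. Then for any continuous functions f_k : [m_k, M_k] → ℝ (applied to T_n(a_k) via the continuous functional calculus), lim_{n→∞} (1/n^ν) Tr[ f_1(T_n(a_1)) · … · f_r(T_n(a_r)) ] = (2π)^{−ν} ∫_{[0,2π)^ν} f_1(a_1(x)) · … · f_r(a_r(x)) dx. -/

import Mathlib

open MeasureTheory Filter Matrix Set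

noncomputable section

/-- The cube `[0, 2π)^ν`. -/
def cube (ν : ℕ) : Set (Fin ν → ℝ) := Set.univ.pi fun _ => Set.Ico 0 (2 * Real.pi)

/-- Fourier coefficient of `a : [0,2π)^ν → ℂ` at `j ∈ ℤ^ν`:
`â(j) = (2π)^{−ν} ∫_{[0,2π)^ν} a(x) e^{−i j·x} dx`. -/
def fourierCoefficient {ν : ℕ} (a : (Fin ν → ℝ) → ℂ) (j : Fin ν → ℤ) : ℂ :=
  (((2 * Real.pi) ^ ν : ℝ) : ℂ)⁻¹ *
    ∫ x in cube ν, a x * Complex.exp (-Complex.I * ∑ m, (j m : ℂ) * (x m : ℂ))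

/-- The Toeplitz compression `T_n(a)`: the `n^ν × n^ν` matrix indexed by multi-indices
`j, k ∈ {0,…,n−1}^ν` with entries `â(j−k)`. -/
def toeplitz {ν : ℕ} (n : ℕ) (a : (Fin ν → ℝ) → ℂ) :
    Matrix (Fin ν → Fin n) (Fin ν → Fin n) ℂ :=
  Matrix.of fun j k => fourierCoefficient a fun m => (j m : ℤ) - (k m : ℤ)

/-!
The matrix `T_n(φ)` is the compression of the operator of multiplication by `φ` on `L²` of the
torus to the span of the Fourier monomials with frequency in the box `{0, …, n-1}^ν`. The defect
`T_n(φψ) - T_n(φ) T_n(ψ)` only sees the part of `ψ e_k` whose frequencies leave the box; by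
Parseval, the average over `k` of the squared norm of this part is the difference between
`∑ |ψ̂(j)|²` and a weighted sum whose weights increase to `1`. Hence `T_n(φ) T_n(ψ)` and
`T_n(φψ)` are asymptotically equivalent in the normalised Hilbert–Schmidt norm, so that polynomials
in Toeplitz compressions are asymptotically Toeplitz; the Weierstrass theorem, with operator-norm
bounds uniform in `n`, extends this to continuous functions. Finally, the normalised trace of
`T_n(φ)` is exactly the mean of `φ`.
-/

section WeakNorm

variable {𝕜 ι : Type*} [RCLike 𝕜] [Fintype ι]

section Frobenius

open scoped Matrix.Norms.Frobenius

/-- The weak norm of a square matrix: the Hilbert–Schmidt norm, normalised so that the identity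
matrix of any nonzero size has norm `1`. -/
def weakNorm (A : Matrix ι ι 𝕜) : ℝ := ‖A‖ / √(Fintype.card ι)

lemma weakNorm_nonneg (A : Matrix ι ι 𝕜) : 0 ≤ weakNorm A := by
  unfold weakNorm; positivity

lemma weakNorm_zero : weakNorm (0 : Matrix ι ι 𝕜) = 0 := by
  rw [weakNorm, norm_zero, zero_div]

lemma weakNorm_add_le (A B : Matrix ι ι 𝕜) : weakNorm (A + B) ≤ weakNorm A + weakNorm B := by
  rw [weakNorm, weakNorm, weakNorm, ← add_div]
  gcongr
  exact norm_add_le A B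

lemma weakNorm_sub_comm (A B : Matrix ι ι 𝕜) : weakNorm (A - B) = weakNorm (B - A) := by
  rw [weakNorm, weakNorm, norm_sub_rev]

lemma weakNorm_conjTranspose (A : Matrix ι ι 𝕜) : weakNorm Aᴴ = weakNorm A := by
  rw [weakNorm, weakNorm, frobenius_norm_conjTranspose]

lemma weakNorm_sq (A : Matrix ι ι 𝕜) :
    weakNorm A ^ 2 = (Fintype.card ι : ℝ)⁻¹ * ∑ k, ∑ j, ‖A j k‖ ^ 2 := by
  rw [weakNorm, div_pow, Real.sq_sqrt (Nat.cast_nonneg _), frobenius_norm_def,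
    ← Real.sqrt_eq_rpow, Real.sq_sqrt (by positivity), Finset.sum_comm, div_eq_inv_mul]
  simp only [Real.rpow_two]

end Frobenius

lemma norm_inv_card_mul_trace_le (A : Matrix ι ι 𝕜) :
    ‖(Fintype.card ι : 𝕜)⁻¹ * A.trace‖ ≤ weakNorm A := by
  refine le_of_sq_le_sq ?_ (weakNorm_nonneg A)
  have trace_sq_le : ‖A.trace‖ ^ 2 ≤ Fintype.card ι * ∑ k, ∑ j, ‖A j k‖ ^ 2 :=
    calc ‖A.trace‖ ^ 2 ≤ (∑ i, ‖A i i‖) ^ 2 := by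
          gcongr
          exact norm_sum_le _ _
      _ ≤ Fintype.card ι * ∑ i, ‖A i i‖ ^ 2 := sq_sum_le_card_mul_sum_sq
      _ ≤ Fintype.card ι * ∑ k, ∑ j, ‖A j k‖ ^ 2 := by
          gcongr with i
          exact Finset.single_le_sum (f := fun j => ‖A j i‖ ^ 2) (fun j _ => by positivity)
            (Finset.mem_univ i)
  rw [norm_mul, norm_inv, RCLike.norm_natCast, mul_pow, weakNorm_sq, inv_pow]
  calc ((Fintype.card ι : ℝ) ^ 2)⁻¹ * ‖A.trace‖ ^ 2
      ≤ ((Fintype.card ι : ℝ) ^ 2)⁻¹ * (Fintype.card ι * ∑ k, ∑ j, ‖A j k‖ ^ 2) := by gcongr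
    _ = (Fintype.card ι : ℝ)⁻¹ * ∑ k, ∑ j, ‖A j k‖ ^ 2 := by
      rcases eq_or_ne (Fintype.card ι : ℝ) 0 with h | h
      · simp [h]
      · field_simp

open scoped Matrix.Norms.L2Operator

variable [DecidableEq ι]

lemma weakNorm_mul_le_left (A B : Matrix ι ι 𝕜) : weakNorm (A * B) ≤ ‖A‖ * weakNorm B := by
  refine le_of_sq_le_sq ?_ (mul_nonneg (norm_nonneg _) (weakNorm_nonneg _))
  have column_le (k : ι) : ∑ j, ‖(A * B) j k‖ ^ 2 ≤ ‖A‖ ^ 2 * ∑ j, ‖B j k‖ ^ 2 := by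
    have h := pow_le_pow_left₀ (norm_nonneg _) (l2_opNorm_mulVec A (WithLp.toLp 2 (B.col k))) 2
    rwa [mul_pow, EuclideanSpace.norm_sq_eq, EuclideanSpace.norm_sq_eq] at h
  rw [mul_pow, weakNorm_sq, weakNorm_sq, mul_left_comm]
  gcongr
  rw [Finset.mul_sum]
  exact Finset.sum_le_sum fun k _ => column_le k

lemma weakNorm_mul_le_right (A B : Matrix ι ι 𝕜) : weakNorm (A * B) ≤ weakNorm A * ‖B‖ := by
  rw [← weakNorm_conjTranspose, conjTranspose_mul, mul_comm, ← l2_opNorm_conjTranspose B,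
    ← weakNorm_conjTranspose A]
  exact weakNorm_mul_le_left _ _

lemma weakNorm_one_le : weakNorm (1 : Matrix ι ι 𝕜) ≤ 1 := by
  refine le_of_sq_le_sq ?_ zero_le_one
  rw [weakNorm_sq]
  simpa [Matrix.one_apply, apply_ite] using inv_mul_le_one

lemma weakNorm_le_norm (A : Matrix ι ι 𝕜) : weakNorm A ≤ ‖A‖ := by
  simpa using (weakNorm_mul_le_left A 1).trans
    (mul_le_of_le_one_right (norm_nonneg A) weakNorm_one_le)

end WeakNorm

section AsymptoticEquivalence

open scoped Matrix.Norms.L2Operator Topology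

variable {𝕜 α : Type*} [RCLike 𝕜] {ι : α → Type*} [∀ i, Fintype (ι i)] [∀ i, DecidableEq (ι i)]
  {l : Filter α} {A A' B B' C : ∀ i, Matrix (ι i) (ι i) 𝕜}

/-- Asymptotic equivalence, in the sense of Gray, of two families of matrices of varying sizes:
both are bounded in operator norm, and their difference tends to zero in the weak norm. -/
structure AsymptoticallyEquivalent (l : Filter α) (A B : ∀ i, Matrix (ι i) (ι i) 𝕜) : Prop where
  bounded_left : ∃ K, ∀ i, ‖A i‖ ≤ K
  bounded_right : ∃ K, ∀ i, ‖B i‖ ≤ K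
  tendsto_weakNorm_sub : Tendsto (fun i => weakNorm (A i - B i)) l (𝓝 0)

namespace AsymptoticallyEquivalent

lemma refl (hA : ∃ K, ∀ i, ‖A i‖ ≤ K) : AsymptoticallyEquivalent l A A where
  bounded_left := hA
  bounded_right := hA
  tendsto_weakNorm_sub := by simpa only [sub_self, weakNorm_zero] using! tendsto_const_nhds

lemma trans (hAB : AsymptoticallyEquivalent l A B) (hBC : AsymptoticallyEquivalent l B C) :
    AsymptoticallyEquivalent l A C where
  bounded_left := hAB.bounded_left
  bounded_right := hBC.bounded_right
  tendsto_weakNorm_sub := by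
    refine squeeze_zero (fun i => weakNorm_nonneg _) (fun i => ?_)
      (by simpa using hAB.tendsto_weakNorm_sub.add hBC.tendsto_weakNorm_sub)
    simpa using weakNorm_add_le (A i - B i) (B i - C i)

lemma add (h : AsymptoticallyEquivalent l A B) (h' : AsymptoticallyEquivalent l A' B') :
    AsymptoticallyEquivalent l (fun i => A i + A' i) (fun i => B i + B' i) where
  bounded_left := by
    obtain ⟨K, hK⟩ := h.bounded_left
    obtain ⟨K', hK'⟩ := h'.bounded_left
    exact ⟨K + K', fun i => norm_add_le_of_le (hK i) (hK' i)⟩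
  bounded_right := by
    obtain ⟨K, hK⟩ := h.bounded_right
    obtain ⟨K', hK'⟩ := h'.bounded_right
    exact ⟨K + K', fun i => norm_add_le_of_le (hK i) (hK' i)⟩
  tendsto_weakNorm_sub := by
    refine squeeze_zero (fun i => weakNorm_nonneg _) (fun i => ?_)
      (by simpa using h.tendsto_weakNorm_sub.add h'.tendsto_weakNorm_sub)
    rw [add_sub_add_comm]
    exact weakNorm_add_le _ _

lemma mul (h : AsymptoticallyEquivalent l A B) (h' : AsymptoticallyEquivalent l A' B') :
    AsymptoticallyEquivalent l (fun i => A i * A' i) (fun i => B i * B' i) := by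
  obtain ⟨KA, hKA⟩ := h.bounded_left
  obtain ⟨KA', hKA'⟩ := h'.bounded_left
  obtain ⟨KB, hKB⟩ := h.bounded_right
  obtain ⟨KB', hKB'⟩ := h'.bounded_right
  refine ⟨⟨KA * KA', fun i => norm_mul_le_of_le (hKA i) (hKA' i)⟩,
    ⟨KB * KB', fun i => norm_mul_le_of_le (hKB i) (hKB' i)⟩, ?_⟩
  have bound_tendsto := (h.tendsto_weakNorm_sub.mul_const KA').add
    (h'.tendsto_weakNorm_sub.const_mul KB)
  rw [zero_mul, mul_zero, add_zero] at bound_tendsto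
  refine squeeze_zero (fun i => weakNorm_nonneg _) (fun i => ?_) bound_tendsto
  calc weakNorm (A i * A' i - B i * B' i)
      = weakNorm ((A i - B i) * A' i + B i * (A' i - B' i)) := by congr 1; noncomm_ring
    _ ≤ weakNorm ((A i - B i) * A' i) + weakNorm (B i * (A' i - B' i)) := weakNorm_add_le _ _
    _ ≤ weakNorm (A i - B i) * ‖A' i‖ + ‖B i‖ * weakNorm (A' i - B' i) :=
      add_le_add (weakNorm_mul_le_right _ _) (weakNorm_mul_le_left _ _)
    _ ≤ weakNorm (A i - B i) * KA' + KB * weakNorm (A' i - B' i) :=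
      add_le_add (mul_le_mul_of_nonneg_left (hKA' i) (weakNorm_nonneg _))
        (mul_le_mul_of_nonneg_right (hKB i) (weakNorm_nonneg _))

lemma of_forall_exists_norm_sub_le
    (h : ∀ ε > 0, ∃ A' B', AsymptoticallyEquivalent l A' B' ∧
      (∀ i, ‖A i - A' i‖ ≤ ε) ∧ ∀ i, ‖B i - B' i‖ ≤ ε) :
    AsymptoticallyEquivalent l A B := by
  obtain ⟨A₁, B₁, h₁, hA₁, hB₁⟩ := h 1 one_pos
  obtain ⟨KA, hKA⟩ := h₁.bounded_left
  obtain ⟨KB, hKB⟩ := h₁.bounded_right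
  refine ⟨⟨1 + KA, fun i => ?_⟩, ⟨1 + KB, fun i => ?_⟩, ?_⟩
  · simpa using norm_add_le_of_le (hA₁ i) (hKA i)
  · simpa using norm_add_le_of_le (hB₁ i) (hKB i)
  refine Metric.tendsto_nhds.2 fun ε hε => ?_
  obtain ⟨A', B', h', hA', hB'⟩ := h (ε / 3) (by positivity)
  filter_upwards [h'.tendsto_weakNorm_sub.eventually_lt_const (show 0 < ε / 3 by positivity)]
    with i hi
  rw [dist_zero_right, Real.norm_of_nonneg (weakNorm_nonneg _)]
  calc weakNorm (A i - B i)
      = weakNorm ((A i - A' i) + (A' i - B' i) + (B' i - B i)) := by congr 1; abel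
    _ ≤ weakNorm (A i - A' i) + weakNorm (A' i - B' i) + weakNorm (B' i - B i) :=
      (weakNorm_add_le _ _).trans (by gcongr; exact weakNorm_add_le _ _)
    _ < ε / 3 + ε / 3 + ε / 3 := by
      have hA := (weakNorm_le_norm _).trans (hA' i)
      have hB := (weakNorm_le_norm _).trans (hB' i)
      rw [weakNorm_sub_comm (B' i)]
      linarith
    _ = ε := by ring

lemma tendsto_trace_sub (h : AsymptoticallyEquivalent l A B) :
    Tendsto (fun i => (Fintype.card (ι i) : 𝕜)⁻¹ * (A i).trace -
      (Fintype.card (ι i) : 𝕜)⁻¹ * (B i).trace) l (𝓝 0) := by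
  refine squeeze_zero_norm (fun i => ?_) h.tendsto_weakNorm_sub
  rw [← mul_sub, ← trace_sub]
  exact norm_inv_card_mul_trace_le _

end AsymptoticallyEquivalent

end AsymptoticEquivalence

section Orthonormal

variable {𝕜 ι H : Type*} [RCLike 𝕜] [Fintype ι] [NormedAddCommGroup H] [InnerProductSpace 𝕜 H]
  {v : ι → H}

lemma norm_sum_smul_sq_of_orthonormal (hv : Orthonormal 𝕜 v) (c : ι → 𝕜) :
    ‖∑ k, c k • v k‖ ^ 2 = ∑ k, ‖c k‖ ^ 2 := by
  rw [← inner_self_eq_norm_sq (𝕜 := 𝕜), hv.inner_sum, map_sum]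
  refine Finset.sum_congr rfl fun k _ => ?_
  rw [RCLike.conj_mul, ← RCLike.ofReal_pow, RCLike.ofReal_re]

lemma norm_sub_sum_inner_smul_sq_of_orthonormal (hv : Orthonormal 𝕜 v) (x : H) :
    ‖x - ∑ k, inner 𝕜 (v k) x • v k‖ ^ 2 = ‖x‖ ^ 2 - ∑ k, ‖inner 𝕜 (v k) x‖ ^ 2 := by
  set y := ∑ k, inner 𝕜 (v k) x • v k with hy
  have orthogonal : inner 𝕜 (x - y) y = 0 := by
    have h (k : ι) : inner 𝕜 (x - y) (v k) = 0 := by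
      rw [inner_eq_zero_symm, inner_sub_right, hy, hv.inner_right_fintype, sub_self]
    rw [hy, inner_sum]
    exact Finset.sum_eq_zero fun k _ => by rw [inner_smul_right, ← hy, h, mul_zero]
  have pythagoras := norm_add_sq_eq_norm_sq_add_norm_sq_of_inner_eq_zero (x - y) y orthogonal
  rw [sub_add_cancel] at pythagoras
  rw [← norm_sum_smul_sq_of_orthonormal hv, ← hy]
  linarith

end Orthonormal

section Compression

open scoped Matrix.Norms.L2Operator ComplexOrder

variable {𝕜 ι H : Type*} [RCLike 𝕜] [NormedAddCommGroup H] [InnerProductSpace 𝕜 H] {v : ι → H}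

/-- The matrix of the compression of an operator to the span of the (orthonormal) family `v`. -/
def compression (v : ι → H) (A : H →L[𝕜] H) : Matrix ι ι 𝕜 :=
  of fun j k => inner 𝕜 (v j) (A (v k))

lemma compression_add (v : ι → H) (A B : H →L[𝕜] H) :
    compression v (A + B) = compression v A + compression v B := by
  ext j k
  simp only [compression, of_apply, Matrix.add_apply, _root_.add_apply,
    inner_add_right]

lemma compression_smul_id [DecidableEq ι] (hv : Orthonormal 𝕜 v) (c : 𝕜) :
    compression v (c • ContinuousLinearMap.id 𝕜 H) = c • (1 : Matrix ι ι 𝕜) := by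
  ext j k
  simp only [compression, of_apply, Matrix.smul_apply, _root_.smul_apply,
    ContinuousLinearMap.id_apply, inner_smul_right, orthonormal_iff_ite.1 hv, Matrix.one_apply,
    smul_eq_mul]

lemma compression_mulVec [Fintype ι] (v : ι → H) (A : H →L[𝕜] H) (x : ι → 𝕜) (j : ι) :
    (compression v A *ᵥ x) j = inner 𝕜 (v j) (A (∑ k, x k • v k)) := by
  simp only [mulVec, dotProduct, compression, of_apply, map_sum, inner_sum, map_smul,
    inner_smul_right, mul_comm]

lemma posSemidef_compression [Finite ι] {A : H →L[𝕜] H} (hA : A.IsPositive) :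
    (compression v A).PosSemidef := by
  cases nonempty_fintype ι
  refine PosSemidef.of_dotProduct_mulVec_nonneg ?_ fun x => ?_
  · ext j k
    simp only [compression, conjTranspose_apply, of_apply, RCLike.star_def, inner_conj_symm]
    exact hA.isSymmetric _ _
  · convert hA.inner_nonneg_right (∑ k, x k • v k)
    simp only [dotProduct, compression_mulVec, sum_inner, inner_smul_left, Pi.star_apply,
      RCLike.star_def]

variable [Fintype ι]

lemma norm_compression_le [DecidableEq ι] (hv : Orthonormal 𝕜 v) (A : H →L[𝕜] H) :
    ‖compression v A‖ ≤ ‖A‖ := by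
  rw [cstar_norm_def]
  refine ContinuousLinearMap.opNorm_le_bound _ (norm_nonneg _) fun x => ?_
  refine le_of_sq_le_sq ?_ (by positivity)
  set y := ∑ k, x k • v k with hy
  calc ‖toEuclideanCLM (n := ι) (𝕜 := 𝕜) (compression v A) x‖ ^ 2
      = ∑ j, ‖inner 𝕜 (v j) (A y)‖ ^ 2 := by
        simp only [EuclideanSpace.norm_sq_eq, ofLp_toEuclideanCLM, compression_mulVec, hy]
    _ ≤ ‖A y‖ ^ 2 := hv.sum_inner_products_le _
    _ ≤ (‖A‖ * ‖y‖) ^ 2 := by gcongr; exact A.le_opNorm y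
    _ = (‖A‖ * ‖x‖) ^ 2 := by
        rw [mul_pow, mul_pow, hy, norm_sum_smul_sq_of_orthonormal hv, EuclideanSpace.norm_sq_eq]

-- The `k`-th column of the defect is the compression of `A` applied to the component of `B (v k)`
-- orthogonal to the span of `v`.
lemma weakNorm_compression_comp_sub_sq_le (hv : Orthonormal 𝕜 v) (A B : H →L[𝕜] H) :
    weakNorm (compression v (A ∘L B) - compression v A * compression v B) ^ 2 ≤
      ‖A‖ ^ 2 * ((Fintype.card ι : ℝ)⁻¹ *
        ∑ k, (‖B (v k)‖ ^ 2 - ∑ l, ‖inner 𝕜 (v l) (B (v k))‖ ^ 2)) := by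
  set g : ι → H := fun k => B (v k) - ∑ l, inner 𝕜 (v l) (B (v k)) • v l with hg
  have entry (j k : ι) : (compression v (A ∘L B) - compression v A * compression v B) j k =
      inner 𝕜 (v j) (A (g k)) := by
    simp only [hg, Matrix.sub_apply, Matrix.mul_apply, compression, of_apply,
      ContinuousLinearMap.comp_apply, map_sub, map_sum, map_smul, inner_sub_right, inner_sum,
      inner_smul_right, mul_comm]
  rw [weakNorm_sq, mul_left_comm]
  gcongr
  rw [Finset.mul_sum]
  refine Finset.sum_le_sum fun k _ => ?_
  calc ∑ j, ‖(compression v (A ∘L B) - compression v A * compression v B) j k‖ ^ 2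
      = ∑ j, ‖inner 𝕜 (v j) (A (g k))‖ ^ 2 := by simp only [entry]
    _ ≤ ‖A (g k)‖ ^ 2 := hv.sum_inner_products_le _
    _ ≤ (‖A‖ * ‖g k‖) ^ 2 := by gcongr; exact A.le_opNorm _
    _ = ‖A‖ ^ 2 * (‖B (v k)‖ ^ 2 - ∑ l, ‖inner 𝕜 (v l) (B (v k))‖ ^ 2) := by
        rw [mul_pow, norm_sub_sum_inner_smul_sq_of_orthonormal hv]

end Compression

section MultiplicationOperator

open scoped ENNReal ComplexOrder InnerProductSpace

variable {X 𝕜 : Type*} [RCLike 𝕜] [MeasurableSpace X] {μ : Measure X} {φ ψ : X → 𝕜}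

/-- The operator on `L²(μ)` of multiplication by an essentially bounded symbol. -/
def multiplicationOperator (φ : Lp 𝕜 ∞ μ) : Lp 𝕜 2 μ →L[𝕜] Lp 𝕜 2 μ :=
  (ContinuousLinearMap.mul 𝕜 𝕜).holderL μ ∞ 2 2 φ

lemma norm_multiplicationOperator_le (φ : Lp 𝕜 ∞ μ) : ‖multiplicationOperator φ‖ ≤ ‖φ‖ :=
  ContinuousLinearMap.opNorm_le_bound _ (norm_nonneg φ) fun g =>
    ((ContinuousLinearMap.mul 𝕜 𝕜).norm_holder_apply_apply_le (r := 2) φ g).trans_eq <| by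
      rw [ContinuousLinearMap.opNorm_mul, one_mul]

lemma coeFn_multiplicationOperator_toLp (hφ : MemLp φ ∞ μ) (g : Lp 𝕜 2 μ) :
    multiplicationOperator hφ.toLp g =ᵐ[μ] fun x => φ x * g x := by
  filter_upwards [(ContinuousLinearMap.mul 𝕜 𝕜).coeFn_holder (r := 2) hφ.toLp g, hφ.coeFn_toLp]
    with x hx hφx
  rw [← hφx]
  exact hx

lemma multiplicationOperator_toLp_const [IsFiniteMeasure μ] (c : 𝕜) :
    multiplicationOperator (memLp_top_const (μ := μ) c).toLp = c • ContinuousLinearMap.id 𝕜 _ := by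
  refine ContinuousLinearMap.ext fun g => Lp.ext ?_
  filter_upwards [coeFn_multiplicationOperator_toLp (memLp_top_const c) g, Lp.coeFn_smul c g]
    with x h₁ h₂
  rw [_root_.smul_apply, ContinuousLinearMap.id_apply, h₁, h₂, Pi.smul_apply,
    smul_eq_mul]

lemma multiplicationOperator_add (φ ψ : Lp 𝕜 ∞ μ) :
    multiplicationOperator (φ + ψ) = multiplicationOperator φ + multiplicationOperator ψ :=
  map_add ((ContinuousLinearMap.mul 𝕜 𝕜).holderL μ ∞ 2 2) φ ψ

lemma multiplicationOperator_toLp_comp (hφ : MemLp φ ∞ μ) (hψ : MemLp ψ ∞ μ) :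
    multiplicationOperator hφ.toLp ∘L multiplicationOperator hψ.toLp =
      multiplicationOperator (hψ.mul hφ : MemLp (φ * ψ) ∞ μ).toLp := by
  refine ContinuousLinearMap.ext fun g => Lp.ext ?_
  filter_upwards [coeFn_multiplicationOperator_toLp hφ (multiplicationOperator hψ.toLp g),
    coeFn_multiplicationOperator_toLp hψ g,
    coeFn_multiplicationOperator_toLp (hψ.mul hφ : MemLp (φ * ψ) ∞ μ) g] with x h₁ h₂ h₃
  rw [ContinuousLinearMap.comp_apply, h₁, h₂, h₃, Pi.mul_apply, mul_assoc]

lemma inner_multiplicationOperator_toLp (hφ : MemLp φ ∞ μ) (g h : Lp 𝕜 2 μ) :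
    ⟪g, multiplicationOperator hφ.toLp h⟫_𝕜 = ∫ x, starRingEnd 𝕜 (g x) * φ x * h x ∂μ := by
  rw [L2.inner_def]
  refine integral_congr_ae ?_
  filter_upwards [coeFn_multiplicationOperator_toLp hφ h] with x hx
  rw [hx, RCLike.inner_apply']
  ring

lemma isPositive_multiplicationOperator_toLp (hφ : MemLp φ ∞ μ) (hφ_nonneg : 0 ≤ᵐ[μ] φ) :
    (multiplicationOperator hφ.toLp).IsPositive := by
  have isSymmetric (g h : Lp 𝕜 2 μ) :
      ⟪multiplicationOperator hφ.toLp g, h⟫_𝕜 = ⟪g, multiplicationOperator hφ.toLp h⟫_𝕜 := by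
    rw [← inner_conj_symm, inner_multiplicationOperator_toLp, inner_multiplicationOperator_toLp,
      ← integral_conj]
    refine integral_congr_ae ?_
    filter_upwards [hφ_nonneg] with x hx
    rw [map_mul, map_mul, RCLike.conj_conj, RCLike.conj_eq_iff_im.2 (RCLike.nonneg_iff.1 hx).2]
    ring
  refine (ContinuousLinearMap.isPositive_iff _).2 ⟨isSymmetric, fun g => ?_⟩
  rw [isSymmetric, inner_multiplicationOperator_toLp]
  refine integral_nonneg_of_ae ?_
  filter_upwards [hφ_nonneg] with x hx
  rw [Pi.zero_apply, mul_right_comm]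
  exact mul_nonneg (star_mul_self_nonneg (g x)) hx

end MultiplicationOperator

section BoundedComposition

open scoped ENNReal

variable {X : Type*} [MeasurableSpace X] {μ : Measure X}

lemma aestronglyMeasurable_comp_of_continuousOn {s : Set ℝ} {f : ℝ → ℝ} {φ : X → ℝ}
    (hf : ContinuousOn f s) (hs : MeasurableSet s) (hφ : AEMeasurable φ μ)
    (hφs : ∀ᵐ x ∂μ, φ x ∈ s) : AEStronglyMeasurable (fun x => f (φ x)) μ := by
  have h := hf.aestronglyMeasurable (μ := μ.map φ) hs
  rw [Measure.restrict_eq_self_of_ae_mem ((ae_map_iff hφ hs).2 hφs)] at h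
  exact h.comp_aemeasurable hφ

lemma memLp_top_comp_of_continuousOn {K : Set ℝ} {f : ℝ → ℝ} {φ : X → ℝ}
    (hK : IsCompact K) (hf : ContinuousOn f K) (hφ : AEMeasurable φ μ)
    (hφK : ∀ᵐ x ∂μ, φ x ∈ K) : MemLp (fun x => f (φ x)) ∞ μ := by
  obtain ⟨C, hC⟩ := hK.exists_bound_of_continuousOn hf
  exact memLp_top_of_bound (aestronglyMeasurable_comp_of_continuousOn hf hK.measurableSet hφ hφK) C
    (hφK.mono fun x hx => hC _ hx)

end BoundedComposition

section Box

open scoped Topology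

variable {d : Type*} {n : ℕ}

/-- A multi-index of the box `{0, …, n-1}ᵈ`, as a point of the lattice `ℤᵈ`. -/
def boxIndex (k : d → Fin n) : d → ℤ := fun i => k i

lemma boxIndex_injective : Function.Injective (boxIndex : (d → Fin n) → d → ℤ) := fun _ _ h =>
  funext fun i => Fin.ext (Int.ofNat_inj.1 (congrFun h i))

lemma card_fin_pairs_sub_eq (n : ℕ) (j : ℤ) :
    Fintype.card {p : Fin n × Fin n // (p.2 : ℤ) - p.1 = j} = n - j.natAbs := by
  have fst_lt (m : Fin (n - j.natAbs)) : m + (-j).toNat < n := by omega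
  have snd_lt (m : Fin (n - j.natAbs)) : m + j.toNat < n := by omega
  let diagonal : {p : Fin n × Fin n // (p.2 : ℤ) - p.1 = j} ≃ Fin (n - j.natAbs) :=
    { toFun := fun p => ⟨min (p.1.1 : ℕ) p.1.2, by have := p.2; omega⟩
      invFun := fun m => ⟨(⟨_, fst_lt m⟩, ⟨_, snd_lt m⟩), by push_cast; omega⟩
      left_inv := fun ⟨p, hp⟩ => by
        refine Subtype.ext (Prod.ext (Fin.ext ?_) (Fin.ext ?_)) <;> dsimp only <;> omega
      right_inv := fun m => Fin.ext (by dsimp only; omega) }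
  rw [Fintype.card_congr diagonal, Fintype.card_fin]

variable [Fintype d] [DecidableEq d]

lemma card_boxIndex_sub_eq (n : ℕ) (j : d → ℤ) :
    Fintype.card {p : (d → Fin n) × (d → Fin n) // boxIndex p.2 - boxIndex p.1 = j} =
      ∏ i, (n - (j i).natAbs) := by
  let coordinatewise : {p : (d → Fin n) × (d → Fin n) // boxIndex p.2 - boxIndex p.1 = j} ≃
      ∀ i, {p : Fin n × Fin n // (p.2 : ℤ) - p.1 = j i} :=
    { toFun := fun p i => ⟨(p.1.1 i, p.1.2 i), congrFun p.2 i⟩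
      invFun := fun q => ⟨(fun i => (q i).1.1, fun i => (q i).1.2), funext fun i => (q i).2⟩
      left_inv := fun _ => rfl
      right_inv := fun _ => rfl }
  rw [Fintype.card_congr coordinatewise, Fintype.card_pi]
  simp only [card_fin_pairs_sub_eq]

lemma sum_sum_boxIndex_sub (n : ℕ) (f : (d → ℤ) → ℝ) :
    ∑ k : d → Fin n, ∑ l : d → Fin n, f (boxIndex l - boxIndex k) =
      ∑' j, (∏ i, (n - (j i).natAbs) : ℕ) * f j := by
  set δ : (d → Fin n) × (d → Fin n) → d → ℤ := fun p => boxIndex p.2 - boxIndex p.1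
  have fiber_card (j : d → ℤ) :
      (Finset.univ.filter fun p => δ p = j).card = ∏ i, (n - (j i).natAbs) := by
    rw [← Fintype.card_subtype, card_boxIndex_sub_eq]
  rw [← Fintype.sum_prod_type fun p => f (δ p), Finset.sum_comp f δ,
    tsum_eq_sum (s := Finset.univ.image δ) fun j hj => ?_]
  · simp only [fiber_card, nsmul_eq_mul]
  · have : (Finset.univ.filter fun p => δ p = j) = ∅ :=
      Finset.filter_eq_empty_iff.2 fun p _ hp =>
        hj (hp ▸ Finset.mem_image_of_mem δ (Finset.mem_univ p))
    rw [← fiber_card, this, Finset.card_empty, Nat.cast_zero, zero_mul]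

lemma tendsto_natCast_sub_div_atTop (m : ℕ) :
    Tendsto (fun n : ℕ => ((n - m : ℕ) : ℝ) / n) atTop (𝓝 1) := by
  have h : Tendsto (fun n : ℕ => 1 - (m : ℝ) / n) atTop (𝓝 (1 - 0)) :=
    (tendsto_const_div_atTop_nhds_zero_nat (m : ℝ)).const_sub 1
  rw [sub_zero] at h
  refine h.congr' ?_
  filter_upwards [eventually_ge_atTop m, eventually_gt_atTop 0] with n hm hn
  rw [Nat.cast_sub hm, sub_div, div_self (by positivity)]

lemma tendsto_box_average {f : (d → ℤ) → ℝ} (hf : Summable f) :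
    Tendsto (fun n : ℕ => ((n : ℝ) ^ Fintype.card d)⁻¹ *
      ∑ k : d → Fin n, ∑ l : d → Fin n, f (boxIndex l - boxIndex k)) atTop (𝓝 (∑' j, f j)) := by
  set w : ℕ → (d → ℤ) → ℝ := fun n j => ∏ i, ((n - (j i).natAbs : ℕ) : ℝ) / n
  have w_tendsto (j : d → ℤ) : Tendsto (w · j) atTop (𝓝 1) := by
    simpa only [Finset.prod_const_one] using tendsto_finsetProd (Finset.univ : Finset d)
      fun i _ => tendsto_natCast_sub_div_atTop (j i).natAbs
  have w_nonneg (n : ℕ) (j : d → ℤ) : 0 ≤ w n j := by positivity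
  have w_le_one (n : ℕ) (j : d → ℤ) : w n j ≤ 1 :=
    Finset.prod_le_one (fun i _ => by positivity) fun i _ =>
      div_le_one_of_le₀ (by exact_mod_cast Nat.sub_le _ _) (by positivity)
  have average_eq (n : ℕ) : ∑' j, w n j * f j = ((n : ℝ) ^ Fintype.card d)⁻¹ *
      ∑ k : d → Fin n, ∑ l : d → Fin n, f (boxIndex l - boxIndex k) := by
    rw [sum_sum_boxIndex_sub, ← tsum_mul_left]
    refine tsum_congr fun j => ?_
    simp only [w, Finset.prod_div_distrib, Finset.prod_const, Finset.card_univ, Nat.cast_prod]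
    rw [div_eq_inv_mul, mul_assoc]
  refine (tendsto_tsum_of_dominated_convergence hf.norm (fun j => ?_) ?_).congr average_eq
  · simpa using (w_tendsto j).mul_const (f j)
  · refine Eventually.of_forall fun n j => ?_
    rw [norm_mul, Real.norm_of_nonneg (w_nonneg n j)]
    exact mul_le_of_le_one_left (norm_nonneg _) (w_le_one n j)

end Box

section Torus

open UnitAddTorus
open scoped ENNReal Topology InnerProductSpace Matrix.Norms.L2Operator

-- As in Mathlib's theory of Fourier series on the torus, `ℝ / ℤ` carries its Haar probability
-- measure.
local instance : MeasureSpace UnitAddCircle := ⟨AddCircle.haarAddCircle⟩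

local instance : IsProbabilityMeasure (volume : Measure UnitAddCircle) :=
  inferInstanceAs (IsProbabilityMeasure AddCircle.haarAddCircle)

variable {d : Type*} [Fintype d] {φ ψ : UnitAddTorus d → ℂ} {n : ℕ}

lemma inner_mFourierLp_multiplicationOperator (hφ : MemLp φ ∞) (j k : d → ℤ) :
    ⟪mFourierLp 2 j, multiplicationOperator hφ.toLp (mFourierLp 2 k)⟫_ℂ =
      mFourierCoeff φ (j - k) := by
  rw [inner_multiplicationOperator_toLp, mFourierCoeff]
  refine integral_congr_ae ?_
  filter_upwards [coeFn_mFourierLp 2 j, coeFn_mFourierLp 2 k] with t hj hk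
  rw [hj, hk, ← mFourier_neg, neg_sub, sub_eq_add_neg, mFourier_add, smul_eq_mul]
  ring

lemma hasSum_norm_mFourierCoeff_sq (hφ : MemLp φ ∞) (k : d → ℤ) :
    HasSum (fun j => ‖mFourierCoeff φ j‖ ^ 2)
      (‖multiplicationOperator hφ.toLp (mFourierLp 2 k)‖ ^ 2) := by
  set g := multiplicationOperator hφ.toLp (mFourierLp 2 k) with hg
  have parseval : HasSum (fun j => ‖⟪mFourierLp 2 j, g⟫_ℂ‖ ^ 2) (‖g‖ ^ 2) := by
    have h := RCLike.hasSum_re ℂ (mFourierBasis.hasSum_inner_mul_inner g g)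
    rw [inner_self_eq_norm_sq] at h
    refine h.congr_fun fun j => ?_
    rw [coe_mFourierBasis, inner_mul_symm_re_eq_norm, norm_mul, norm_inner_symm, sq]
  refine (Equiv.subRight k).hasSum_iff.1 (parseval.congr_fun fun j => ?_)
  rw [hg, inner_mFourierLp_multiplicationOperator, Function.comp_apply, Equiv.subRight_apply]

/-- The Toeplitz compression of size `n` in each direction of a symbol on the torus `(ℝ / ℤ)ᵈ`,
with entries the Fourier coefficients of the symbol at the differences of multi-indices. -/
def torusToeplitz (n : ℕ) (φ : UnitAddTorus d → ℂ) : Matrix (d → Fin n) (d → Fin n) ℂ :=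
  of fun j k => mFourierCoeff φ (boxIndex j - boxIndex k)

lemma torusToeplitz_eq_compression (hφ : MemLp φ ∞) (n : ℕ) :
    torusToeplitz n φ = compression (fun k : d → Fin n => mFourierLp 2 (boxIndex k))
      (multiplicationOperator hφ.toLp) := by
  ext j k
  exact (inner_mFourierLp_multiplicationOperator hφ _ _).symm

lemma orthonormal_mFourierLp_boxIndex (d : Type*) [Fintype d] (n : ℕ) :
    Orthonormal ℂ fun k : d → Fin n => mFourierLp 2 (boxIndex k) :=
  orthonormal_mFourier.comp _ boxIndex_injective

lemma torusToeplitz_add (hφ : MemLp φ ∞) (hψ : MemLp ψ ∞) (n : ℕ) :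
    torusToeplitz n (φ + ψ) = torusToeplitz n φ + torusToeplitz n ψ := by
  rw [torusToeplitz_eq_compression (hφ.add hψ), torusToeplitz_eq_compression hφ,
    torusToeplitz_eq_compression hψ, MemLp.toLp_add, multiplicationOperator_add, compression_add]

lemma torusToeplitz_sub (hφ : MemLp φ ∞) (hψ : MemLp ψ ∞) (n : ℕ) :
    torusToeplitz n (φ - ψ) = torusToeplitz n φ - torusToeplitz n ψ := by
  rw [eq_sub_iff_add_eq, ← torusToeplitz_add (hφ.sub hψ) hψ, sub_add_cancel]

lemma isSelfAdjoint_torusToeplitz (u : UnitAddTorus d → ℝ) (n : ℕ) :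
    IsSelfAdjoint (torusToeplitz n fun t => (u t : ℂ)) := by
  ext j k
  rw [Matrix.star_apply, torusToeplitz, of_apply, of_apply, mFourierCoeff, mFourierCoeff,
    RCLike.star_def, ← integral_conj]
  refine integral_congr_ae (.of_forall fun t => ?_)
  simp only [smul_eq_mul, map_mul, Complex.conj_ofReal, ← mFourier_neg, neg_sub]

open scoped ComplexOrder in
lemma posSemidef_torusToeplitz (hφ : MemLp φ ∞) (hφ_nonneg : 0 ≤ᵐ[volume] φ) (n : ℕ) :
    (torusToeplitz n φ).PosSemidef := by
  rw [torusToeplitz_eq_compression hφ]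
  exact posSemidef_compression (isPositive_multiplicationOperator_toLp hφ hφ_nonneg)

variable [DecidableEq d]

lemma torusToeplitz_const (n : ℕ) (c : ℂ) :
    torusToeplitz n (fun _ : UnitAddTorus d => c) = algebraMap ℂ _ c := by
  rw [torusToeplitz_eq_compression (memLp_top_const c), multiplicationOperator_toLp_const,
    compression_smul_id (orthonormal_mFourierLp_boxIndex d n), Algebra.algebraMap_eq_smul_one]

lemma exists_norm_torusToeplitz_le (hφ : MemLp φ ∞) : ∃ K, ∀ n, ‖torusToeplitz n φ‖ ≤ K := by
  refine ⟨‖multiplicationOperator hφ.toLp‖, fun n => ?_⟩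
  rw [torusToeplitz_eq_compression hφ]
  exact norm_compression_le (orthonormal_mFourierLp_boxIndex d n) _

lemma norm_torusToeplitz_le (hφ : MemLp φ ∞) {C : ℝ} (hC : 0 ≤ C)
    (hφC : ∀ᵐ t, ‖φ t‖ ≤ C) (n : ℕ) : ‖torusToeplitz n φ‖ ≤ C := by
  have norm_toLp_le : ‖hφ.toLp‖ ≤ C := by
    have h := Lp.norm_le_of_ae_bound (f := hφ.toLp) hC (by
      filter_upwards [hφ.coeFn_toLp, hφC] with t ht hCt
      rwa [ht])
    simpa using h
  rw [torusToeplitz_eq_compression hφ]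
  exact (norm_compression_le (orthonormal_mFourierLp_boxIndex d n) _).trans
    ((norm_multiplicationOperator_le _).trans norm_toLp_le)

section RealSymbol

open scoped MatrixOrder ComplexOrder

variable {u : UnitAddTorus d → ℝ} {m M : ℝ}

lemma algebraMap_le_torusToeplitz (hu : MemLp (fun t => (u t : ℂ)) ∞) (hmu : ∀ᵐ t, m ≤ u t)
    (n : ℕ) : algebraMap ℝ _ m ≤ torusToeplitz n fun t => (u t : ℂ) := by
  rw [IsScalarTower.algebraMap_apply ℝ ℂ, ← torusToeplitz_const, Matrix.le_iff,
    ← torusToeplitz_sub hu (memLp_top_const _)]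
  refine posSemidef_torusToeplitz (hu.sub (memLp_top_const _)) ?_ n
  filter_upwards [hmu] with t ht
  exact sub_nonneg.2 (Complex.real_le_real.2 ht)

lemma torusToeplitz_le_algebraMap (hu : MemLp (fun t => (u t : ℂ)) ∞) (huM : ∀ᵐ t, u t ≤ M)
    (n : ℕ) : (torusToeplitz n fun t => (u t : ℂ)) ≤ algebraMap ℝ _ M := by
  rw [IsScalarTower.algebraMap_apply ℝ ℂ, ← torusToeplitz_const, Matrix.le_iff,
    ← torusToeplitz_sub (memLp_top_const _) hu]
  refine posSemidef_torusToeplitz ((memLp_top_const _).sub hu) ?_ n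
  filter_upwards [huM] with t ht
  exact sub_nonneg.2 (Complex.real_le_real.2 ht)

lemma spectrum_torusToeplitz_subset (hu : MemLp (fun t => (u t : ℂ)) ∞)
    (hmM : ∀ᵐ t, u t ∈ Icc m M) (n : ℕ) :
    spectrum ℝ (torusToeplitz n fun t => (u t : ℂ)) ⊆ Icc m M := fun x hx =>
  ⟨(algebraMap_le_iff_le_spectrum (isSelfAdjoint_torusToeplitz u n)).1
      (algebraMap_le_torusToeplitz hu (hmM.mono fun _ h => h.1) n) x hx,
    (le_algebraMap_iff_spectrum_le (isSelfAdjoint_torusToeplitz u n)).1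
      (torusToeplitz_le_algebraMap hu (hmM.mono fun _ h => h.2) n) x hx⟩

end RealSymbol

lemma weakNorm_torusToeplitz_mul_sub_sq_le (hφ : MemLp φ ∞) (hψ : MemLp ψ ∞) (hn : n ≠ 0) :
    weakNorm (torusToeplitz n (φ * ψ) - torusToeplitz n φ * torusToeplitz n ψ) ^ 2 ≤
      ‖multiplicationOperator hφ.toLp‖ ^ 2 * (∑' j, ‖mFourierCoeff ψ j‖ ^ 2 -
        ((n : ℝ) ^ Fintype.card d)⁻¹ * ∑ k : d → Fin n, ∑ l : d → Fin n,
          ‖mFourierCoeff ψ (boxIndex l - boxIndex k)‖ ^ 2) := by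
  have h := weakNorm_compression_comp_sub_sq_le (orthonormal_mFourierLp_boxIndex d n)
    (multiplicationOperator hφ.toLp) (multiplicationOperator hψ.toLp)
  rw [multiplicationOperator_toLp_comp, ← torusToeplitz_eq_compression,
    ← torusToeplitz_eq_compression, ← torusToeplitz_eq_compression] at h
  refine h.trans_eq ?_
  have column_norm (k : d → Fin n) :
      ‖multiplicationOperator hψ.toLp (mFourierLp 2 (boxIndex k))‖ ^ 2 =
        ∑' j, ‖mFourierCoeff ψ j‖ ^ 2 :=
    (hasSum_norm_mFourierCoeff_sq hψ _).tsum_eq.symm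
  simp only [column_norm, inner_mFourierLp_multiplicationOperator, Finset.sum_sub_distrib,
    Finset.sum_const, Finset.card_univ, Fintype.card_fun, Fintype.card_fin, nsmul_eq_mul,
    mul_sub, Nat.cast_pow]
  rw [inv_mul_cancel_left₀ (pow_ne_zero _ (Nat.cast_ne_zero.2 hn))]

lemma asymptoticallyEquivalent_torusToeplitz_mul (hφ : MemLp φ ∞) (hψ : MemLp ψ ∞) :
    AsymptoticallyEquivalent atTop (fun n => torusToeplitz n φ * torusToeplitz n ψ)
      (fun n => torusToeplitz n (φ * ψ)) where
  bounded_left := by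
    obtain ⟨K, hK⟩ := exists_norm_torusToeplitz_le hφ
    obtain ⟨K', hK'⟩ := exists_norm_torusToeplitz_le hψ
    exact ⟨K * K', fun n => norm_mul_le_of_le (hK n) (hK' n)⟩
  bounded_right := exists_norm_torusToeplitz_le (hψ.mul hφ)
  tendsto_weakNorm_sub := by
    have bound_tendsto := ((tendsto_box_average (hasSum_norm_mFourierCoeff_sq hψ 0).summable
      ).const_sub (∑' j, ‖mFourierCoeff ψ j‖ ^ 2)).const_mul
        (‖multiplicationOperator hφ.toLp‖ ^ 2) |>.sqrt
    rw [sub_self, mul_zero, Real.sqrt_zero] at bound_tendsto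
    refine squeeze_zero' (.of_forall fun n => weakNorm_nonneg _) ?_ bound_tendsto
    filter_upwards [eventually_ne_atTop 0] with n hn
    rw [weakNorm_sub_comm]
    exact Real.le_sqrt_of_sq_le (weakNorm_torusToeplitz_mul_sub_sq_le hφ hψ hn)

lemma inv_card_mul_trace_torusToeplitz (hn : n ≠ 0) (φ : UnitAddTorus d → ℂ) :
    (Fintype.card (d → Fin n) : ℂ)⁻¹ * (torusToeplitz n φ).trace = ∫ t, φ t := by
  have mFourierCoeff_zero : mFourierCoeff φ 0 = ∫ t, φ t := by
    simp only [mFourierCoeff, neg_zero, mFourier_zero, ContinuousMap.one_apply, one_smul]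
  have card_ne_zero : (Fintype.card (d → Fin n) : ℂ) ≠ 0 := by
    rw [Fintype.card_fun, Fintype.card_fin]
    exact_mod_cast pow_ne_zero _ hn
  simp only [trace, diag_apply, torusToeplitz, of_apply, sub_self, mFourierCoeff_zero,
    Finset.sum_const, Finset.card_univ, nsmul_eq_mul]
  rw [inv_mul_cancel_left₀ card_ne_zero]

/-- The matrices `A n` have asymptotic symbol `φ` when they are asymptotically equivalent to the
Toeplitz compressions of the essentially bounded function `φ`. -/
structure HasSymbol (A : ∀ n, Matrix (d → Fin n) (d → Fin n) ℂ) (φ : UnitAddTorus d → ℂ) :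
    Prop where
  memLp : MemLp φ ∞
  equiv : AsymptoticallyEquivalent atTop A fun n => torusToeplitz n φ

lemma hasSymbol_torusToeplitz (hφ : MemLp φ ∞) : HasSymbol (fun n => torusToeplitz n φ) φ :=
  ⟨hφ, .refl (exists_norm_torusToeplitz_le hφ)⟩

lemma hasSymbol_algebraMap (c : ℂ) :
    HasSymbol (fun n => algebraMap ℂ (Matrix (d → Fin n) (d → Fin n) ℂ) c) fun _ => c := by
  simpa only [torusToeplitz_const] using hasSymbol_torusToeplitz (d := d) (memLp_top_const c)

namespace HasSymbol

variable {A B : ∀ n, Matrix (d → Fin n) (d → Fin n) ℂ}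

lemma add (hA : HasSymbol A φ) (hB : HasSymbol B ψ) :
    HasSymbol (fun n => A n + B n) (φ + ψ) where
  memLp := hA.memLp.add hB.memLp
  equiv := by
    simpa only [torusToeplitz_add hA.memLp hB.memLp] using hA.equiv.add hB.equiv

lemma mul (hA : HasSymbol A φ) (hB : HasSymbol B ψ) :
    HasSymbol (fun n => A n * B n) (φ * ψ) where
  memLp := hB.memLp.mul hA.memLp
  equiv := (hA.equiv.mul hB.equiv).trans
    (asymptoticallyEquivalent_torusToeplitz_mul hA.memLp hB.memLp)

lemma aeval {R : Type*} [CommSemiring R] [Algebra R ℂ] (hA : HasSymbol A φ)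
    (p : Polynomial R) :
    HasSymbol (fun n => Polynomial.aeval (A n) p) fun t => Polynomial.aeval (φ t) p := by
  induction p using Polynomial.induction_on with
  | C a =>
    simpa only [Polynomial.aeval_C, IsScalarTower.algebraMap_apply R ℂ (Matrix _ _ ℂ)] using
      hasSymbol_algebraMap (algebraMap R ℂ a)
  | add p q hp hq => simpa only [map_add] using! hp.add hq
  | monomial k a h =>
    simpa only [pow_succ, ← mul_assoc, map_mul, Polynomial.aeval_X] using! h.mul hA

lemma cfc {u : UnitAddTorus d → ℝ} {m M : ℝ} {f : ℝ → ℝ}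
    (hA : HasSymbol A fun t => (u t : ℂ)) (hA_selfAdjoint : ∀ n, IsSelfAdjoint (A n))
    (hA_spectrum : ∀ n, spectrum ℝ (A n) ⊆ Icc m M) (hu : AEMeasurable u)
    (hmM : ∀ᵐ t, u t ∈ Icc m M) (hf : ContinuousOn f (Icc m M)) :
    HasSymbol (fun n => cfc f (A n)) fun t => (f (u t) : ℂ) := by
  have memLp_comp : MemLp (fun t => (f (u t) : ℂ)) ∞ :=
    (memLp_top_comp_of_continuousOn isCompact_Icc hf hu hmM).ofReal
  refine ⟨memLp_comp, .of_forall_exists_norm_sub_le fun ε hε => ?_⟩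
  obtain ⟨p, hp⟩ := exists_polynomial_near_of_continuousOn m M f hf ε hε
  have hpA := hA.aeval p
  refine ⟨_, _, hpA.equiv, fun n => ?_, fun n => ?_⟩
  · rw [← cfc_polynomial p (A n) (hA_selfAdjoint n),
      ← cfc_sub f p.eval _ (hf.mono (hA_spectrum n)) p.continuous.continuousOn]
    refine norm_cfc_le hε.le fun x hx => ?_
    rw [norm_sub_rev]
    exact (hp x (hA_spectrum n hx)).le
  · rw [← torusToeplitz_sub memLp_comp hpA.memLp]
    refine norm_torusToeplitz_le (memLp_comp.sub hpA.memLp) hε.le ?_ n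
    filter_upwards [hmM] with t ht
    rw [Pi.sub_apply, norm_sub_rev, ← Complex.coe_algebraMap, Polynomial.aeval_algebraMap_apply,
      ← map_sub, norm_algebraMap', Polynomial.coe_aeval_eq_eval]
    exact (hp _ ht).le

lemma list_prod_ofFn {r : ℕ} {A : Fin r → ∀ n, Matrix (d → Fin n) (d → Fin n) ℂ}
    {φ : Fin r → UnitAddTorus d → ℂ} (h : ∀ k, HasSymbol (A k) (φ k)) :
    HasSymbol (fun n => (List.ofFn fun k => A k n).prod) (∏ k, φ k) := by
  induction r with
  | zero => simpa only [List.ofFn_zero, map_one] using! hasSymbol_algebraMap (d := d) 1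
  | succ r ih =>
    simp only [List.ofFn_succ, List.prod_cons, Fin.prod_univ_succ]
    exact (h 0).mul (ih fun k => h k.succ)

lemma tendsto_trace (h : HasSymbol A φ) :
    Tendsto (fun n : ℕ => ((n : ℂ) ^ Fintype.card d)⁻¹ * (A n).trace) atTop (𝓝 (∫ t, φ t)) := by
  have trace_sub := h.equiv.tendsto_trace_sub.add_const (∫ t, φ t)
  rw [zero_add] at trace_sub
  refine trace_sub.congr' ?_
  filter_upwards [eventually_ne_atTop 0] with n hn
  rw [inv_card_mul_trace_torusToeplitz hn, sub_add_cancel, Fintype.card_fun,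
    Fintype.card_fin, Nat.cast_pow]

end HasSymbol

theorem tendsto_trace_prod_cfc_torusToeplitz {r : ℕ} {u : Fin r → UnitAddTorus d → ℝ}
    {m M : Fin r → ℝ} {f : Fin r → ℝ → ℝ} (hu : ∀ k, AEMeasurable (u k))
    (hmM : ∀ k, ∀ᵐ t, u k t ∈ Icc (m k) (M k))
    (hf : ∀ k, ContinuousOn (f k) (Icc (m k) (M k))) :
    Tendsto (fun n : ℕ => ((n : ℂ) ^ Fintype.card d)⁻¹ *
        (List.ofFn fun k => cfc (f k) (torusToeplitz n fun t => (u k t : ℂ))).prod.trace) atTop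
      (𝓝 (∫ t, ∏ k, f k (u k t) : ℝ)) := by
  have memLp_u (k : Fin r) : MemLp (fun t => (u k t : ℂ)) ∞ :=
    (memLp_top_comp_of_continuousOn isCompact_Icc continuousOn_id (hu k) (hmM k)).ofReal
  have symbol := HasSymbol.list_prod_ofFn fun k =>
    (hasSymbol_torusToeplitz (memLp_u k)).cfc
      (isSelfAdjoint_torusToeplitz (u k)) (spectrum_torusToeplitz_subset (memLp_u k) (hmM k))
      (hu k) (hmM k) (hf k)
  have h := symbol.tendsto_trace
  simpa only [Finset.prod_apply, ← Complex.ofReal_prod, integral_complex_ofReal] using h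

variable {ν : ℕ}

/-- The parametrisation of the cube by the torus: the `i`-th coordinate of the image of `t` is `2π`
times the representative of `t i` in `(0, 1]`. The range is `(0, 2π]^ν`, which differs from the cube
by a null set. -/
def torusToCube (t : UnitAddTorus (Fin ν)) : Fin ν → ℝ :=
  (2 * Real.pi) • fun i => (AddCircle.equivIoc 1 0 (t i) : ℝ)

lemma measurableEmbedding_torusToCube : MeasurableEmbedding (torusToCube (ν := ν)) :=
  (Homeomorph.smulOfNeZero _ Real.two_pi_pos.ne').measurableEmbedding.comp <|
    (MeasurableEmbedding.subtype_coe (MeasurableSet.univ_pi' fun _ => measurableSet_Ioc)).comp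
      (measurableEquivPiIoc fun _ : Fin ν => 0).measurableEmbedding

lemma preimage_two_pi_smul_pi_Ioc :
    ((2 * Real.pi) • · : (Fin ν → ℝ) → Fin ν → ℝ) ⁻¹' univ.pi (fun _ => Ioc 0 (2 * Real.pi)) =
      {x | ∀ i, x i ∈ Ioc (0 : ℝ) (0 + 1)} := by
  ext x
  simp only [mem_preimage, mem_univ_pi, Pi.smul_apply, smul_eq_mul, mem_Ioc, mem_ofPred_eq,
    zero_add, mul_pos_iff_of_pos_left Real.two_pi_pos, mul_le_iff_le_one_right Real.two_pi_pos]

lemma pi_Ioc_ae_eq_cube : univ.pi (fun _ : Fin ν => Ioc 0 (2 * Real.pi)) =ᵐ[volume] cube ν :=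
  Measure.univ_pi_Ioc_ae_eq_Icc.trans Measure.univ_pi_Ico_ae_eq_Icc.symm

lemma measurePreserving_torusToCube : MeasurePreserving (torusToCube (ν := ν)) volume
    (ENNReal.ofReal ((2 * Real.pi) ^ ν)⁻¹ • volume.restrict (cube ν)) := by
  have scale : MeasurePreserving ((2 * Real.pi) • · : (Fin ν → ℝ) → Fin ν → ℝ) volume
      (ENNReal.ofReal ((2 * Real.pi) ^ ν)⁻¹ • volume) := by
    refine ⟨measurable_const_smul _, ?_⟩
    rw [Measure.map_addHaar_smul _ Real.two_pi_pos.ne', Module.finrank_fin_fun,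
      abs_of_nonneg (by positivity)]
  have restricted := scale.restrict_preimage
    (MeasurableSet.univ_pi fun _ : Fin ν => measurableSet_Ioc (a := 0) (b := 2 * Real.pi))
  rw [preimage_two_pi_smul_pi_Ioc, Measure.restrict_smul,
    Measure.restrict_congr_set pi_Ioc_ae_eq_cube] at restricted
  exact (restricted.comp (measurePreserving_subtype_coe
    (MeasurableSet.univ_pi' fun _ => measurableSet_Ioc))).comp
      (measurePreserving_equivPiIoc fun _ => 0)

lemma ae_comp_torusToCube {p : (Fin ν → ℝ) → Prop} (hp : ∀ᵐ x ∂volume.restrict (cube ν), p x) :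
    ∀ᵐ t, p (torusToCube t) :=
  measurePreserving_torusToCube.quasiMeasurePreserving.ae (Measure.ae_smul_measure hp _)

lemma integral_comp_torusToCube {E : Type*} [NormedAddCommGroup E] [NormedSpace ℝ E]
    (g : (Fin ν → ℝ) → E) :
    ∫ t, g (torusToCube t) = ((2 * Real.pi) ^ ν)⁻¹ • ∫ x in cube ν, g x := by
  rw [measurePreserving_torusToCube.integral_comp measurableEmbedding_torusToCube,
    integral_smul_measure, ENNReal.toReal_ofReal (by positivity)]

lemma mFourier_neg_eq_exp_torusToCube (j : Fin ν → ℤ) (t : UnitAddTorus (Fin ν)) :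
    mFourier (-j) t = Complex.exp (-Complex.I * ∑ i, (j i : ℂ) * (torusToCube t i : ℂ)) := by
  rw [mFourier, ContinuousMap.coe_mk, Finset.mul_sum, Complex.exp_sum]
  refine Finset.prod_congr rfl fun i _ => ?_
  conv_lhs => rw [← (AddCircle.equivIoc (1 : ℝ) 0).symm_apply_apply (t i)]
  refine (fourier_coe_apply (T := 1)).trans (congrArg Complex.exp ?_)
  simp only [torusToCube, Pi.smul_apply, smul_eq_mul, Pi.neg_apply]
  push_cast
  ring

lemma toeplitz_eq_torusToeplitz (n : ℕ) (a : (Fin ν → ℝ) → ℂ) :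
    toeplitz n a = torusToeplitz n fun t => a (torusToCube t) := by
  ext j k
  rw [toeplitz, of_apply, fourierCoefficient, ← Complex.ofReal_inv, ← Complex.real_smul,
    ← integral_comp_torusToCube, torusToeplitz, of_apply, mFourierCoeff]
  refine integral_congr_ae (.of_forall fun t => ?_)
  simp only [mFourier_neg_eq_exp_torusToCube, smul_eq_mul]
  exact mul_comm _ _

end Torus

/-- **Szegő-type theorem, continuous-function version.**  For bounded measurable real-valued
`a_1, …, a_r : [0,2π)^ν → ℝ` with essential range of `a_k` contained in `[m_k, M_k]`, and
continuous `f_k : [m_k, M_k] → ℝ` (applied to the Hermitian matrices `T_n(a_k)` via the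
continuous functional calculus),
`lim_n (1/n^ν) Tr[f_1(T_n(a_1)) ⋯ f_r(T_n(a_r))]
  = (2π)^{−ν} ∫_{[0,2π)^ν} f_1(a_1(x)) ⋯ f_r(a_r(x)) dx`. -/
theorem szego_continuous {ν r : ℕ} (hν : 1 ≤ ν)
    (a : Fin r → (Fin ν → ℝ) → ℝ) (m M : Fin r → ℝ)
    (hmeas : ∀ k, Measurable (a k))
    (hrange : ∀ k, ∀ᵐ x ∂(volume.restrict (cube ν)), a k x ∈ Set.Icc (m k) (M k))
    (f : Fin r → ℝ → ℝ)
    (hf : ∀ k, ContinuousOn (f k) (Set.Icc (m k) (M k))) :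
    Tendsto
      (fun n : ℕ => ((n : ℂ) ^ ν)⁻¹ *
        Matrix.trace
          (List.ofFn fun k => cfc (f k) (toeplitz n (fun x => (a k x : ℂ)))).prod)
      atTop
      (nhds ((((2 * Real.pi) ^ ν : ℝ) : ℂ)⁻¹ *
        ((∫ x in cube ν, ∏ k, f k (a k x) : ℝ) : ℂ))) := by
  have limit := tendsto_trace_prod_cfc_torusToeplitz
    (u := fun k t => a k (torusToCube t))
    (fun k => (hmeas k).comp_aemeasurable measurePreserving_torusToCube.aemeasurable)
    (fun k => ae_comp_torusToCube (hrange k)) hf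
  rw [integral_comp_torusToCube fun x => ∏ k, f k (a k x), smul_eq_mul, Complex.ofReal_mul,
    Complex.ofReal_inv, Fintype.card_fin] at limit
  simpa only [toeplitz_eq_torusToeplitz] using limit

end
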